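/- Tightness (Theorem 2): for every ε ∈ [0,1] and every γ > 0 there exists a liquid democracy game such that every ε-Nash equilibrium x satisfies SW(x) ≤ ε · OPT + γ. Hence the price of stability for ε-Nash equilibria is exactly ε. -/

import Mathlib

/-!
An agent ends up with guru `j` only if `j` votes, and with guru `j ≠ i` only if moreover `i` does
not vote. Conversely, whoever delegates to `j` while `j` votes has guru `j`. As agents randomize
independently, the probability that `j` is the guru of `i ≠ j` lies between `x i j * x j j` and
`(1 - x i i) * x j j`.

Suppose a hub `i` and an authority `j` both value only the authority as guru. In an `ε`-Nash
equilibrium with `ε < 1` the authority votes with probability `x j j > 0`. By delegating to her the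
hub would make this the probability that the authority is her guru, instead of at most
`(1 - x i i) * x j j`. Hence `1 - x i i ≥ 1 - ε`: the hub votes with probability at most `ε`.

Add a follower who values only the hub as guru, at `1`, and let the other two value the authority at
a small `δ`. The follower gains nothing unless the hub votes, so equilibrium welfare is at most
`ε + 2 * δ`, whereas everybody delegating to a voting hub gives welfare `1`. As the optimum is thus
at least `1` for every `γ`, the additive error does not trivialize the bound.
-/

open Finset

/-- The guru of agent `i` under pure profile `s` (where `s i = some j` means `i`
delegates to `j`, with `s i = some i` meaning `i` votes herself, and `s i = none`
meaning `i` abstains): follow delegation arcs for `n` steps; the endpoint is the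
guru provided it votes itself. -/
def guru {n : ℕ} (s : Fin n → Option (Fin n)) (i : Fin n) : Option (Fin n) :=
  ((fun o => Option.bind o s)^[n] (some i)).bind
    (fun j => if s j = some j then some j else none)

/-- Utility of agent `i` in the pure profile `s`: `u i (g i)` if the guru exists, else `0`. -/
def pureUtil {n : ℕ} (u : Fin n → Fin n → ℝ) (s : Fin n → Option (Fin n)) (i : Fin n) : ℝ :=
  (guru s i).elim 0 (u i)

/-- A mixed strategy for a single agent: nonnegative, total probability at most one
(the residual probability is abstention). -/
def IsStrat {n : ℕ} (y : Fin n → ℝ) : Prop := (∀ j, 0 ≤ y j) ∧ (∑ j, y j) ≤ 1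

/-- A mixed strategy profile. -/
def IsMixed {n : ℕ} (x : Fin n → Fin n → ℝ) : Prop := ∀ i, IsStrat (x i)

/-- Probability that the independent randomization `x` produces the pure profile `s`. -/
def prob {n : ℕ} (x : Fin n → Fin n → ℝ) (s : Fin n → Option (Fin n)) : ℝ :=
  ∏ i, (s i).elim (1 - ∑ j, x i j) (x i)

/-- Expected utility of agent `i` under the mixed profile `x`. -/
def util {n : ℕ} (u x : Fin n → Fin n → ℝ) (i : Fin n) : ℝ :=
  ∑ s : Fin n → Option (Fin n), prob x s * pureUtil u s i

/-- Expected social welfare of the mixed profile `x`. -/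
def SW {n : ℕ} (u x : Fin n → Fin n → ℝ) : ℝ := ∑ i, util u x i

/-- The set of social-welfare values achievable by mixed profiles; `OPT` is its greatest element. -/
def SWvals {n : ℕ} (u : Fin n → Fin n → ℝ) : Set ℝ :=
  {w | ∃ x, IsMixed x ∧ w = SW u x}

/-- `x` is an `ε`-Nash equilibrium. -/
def EpsNash {n : ℕ} (u : Fin n → Fin n → ℝ) (ε : ℝ) (x : Fin n → Fin n → ℝ) : Prop :=
  ∀ i y, IsStrat y → util u x i ≥ (1 - ε) * util u (Function.update x i y) i

/-- `x` is an (exact, mixed) Nash equilibrium. -/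
def NashEq {n : ℕ} (u x : Fin n → Fin n → ℝ) : Prop :=
  ∀ i y, IsStrat y → util u x i ≥ util u (Function.update x i y) i

section Guru

variable {n : ℕ} {s : Fin n → Option (Fin n)} {i j : Fin n}

theorem votes_of_guru_eq_some (h : guru s i = some j) : s j = some j := by
  obtain ⟨k, -, hk⟩ := Option.bind_eq_some_iff.mp h
  split_ifs at hk with hvote
  obtain rfl : k = j := Option.some.inj hk
  exact hvote

theorem guru_eq_some_of_delegates (hij : s i = some j) (hj : s j = some j) :
    guru s i = some j := by
  obtain ⟨m, rfl⟩ : ∃ m, n = m + 1 := Nat.exists_eq_succ_of_ne_zero i.pos.ne'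
  have hfixed : (fun o => Option.bind o s)^[m] (some j) = some j :=
    Function.iterate_fixed hj m
  simp only [guru, Function.iterate_succ_apply, Option.bind_some, hij, hfixed, hj, if_true]

theorem guru_self_eq_some_iff : guru s i = some i ↔ s i = some i :=
  ⟨votes_of_guru_eq_some, fun h => guru_eq_some_of_delegates h h⟩

theorem not_votes_of_guru_eq_some (hij : i ≠ j) (h : guru s i = some j) : s i ≠ some i := by
  intro hi
  rw [guru_self_eq_some_iff.mpr hi] at h
  exact hij (Option.some.inj h)

end Guru

section ChoiceProb

variable {n : ℕ} {y : Fin n → ℝ}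

/-- The probability that the mixed strategy `y` makes the choice `o`, where `none` is abstention.
It is the factor contributed by one agent to `prob`. -/
def choiceProb (y : Fin n → ℝ) (o : Option (Fin n)) : ℝ := o.elim (1 - ∑ j, y j) y

theorem IsStrat.choiceProb_nonneg (hy : IsStrat y) : ∀ o, 0 ≤ choiceProb y o
  | none => sub_nonneg.mpr hy.2
  | some j => hy.1 j

theorem sum_choiceProb (y : Fin n → ℝ) : ∑ o, choiceProb y o = 1 := by
  simp [choiceProb, Fintype.sum_option]

theorem sum_compl_choiceProb (y : Fin n → ℝ) (j : Fin n) :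
    ∑ o ∈ {some j}ᶜ, choiceProb y o = 1 - y j := by
  have hsplit := Finset.sum_compl_add_sum {some j} (choiceProb y)
  rw [sum_choiceProb, Finset.sum_singleton] at hsplit
  exact eq_sub_of_add_eq hsplit

theorem choiceProb_single (j : Fin n) (o : Option (Fin n)) :
    choiceProb (Pi.single j 1) o = if o = some j then 1 else 0 := by
  cases o <;> simp [choiceProb, Pi.single_apply]

theorem isStrat_single (j : Fin n) : IsStrat (Pi.single j 1 : Fin n → ℝ) :=
  have hmem := single_mem_stdSimplex ℝ j
  ⟨hmem.1, hmem.2.le⟩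

end ChoiceProb

section Prob

variable {n : ℕ} {x : Fin n → Fin n → ℝ}

theorem IsMixed.prob_nonneg (hx : IsMixed x) (s : Fin n → Option (Fin n)) : 0 ≤ prob x s :=
  Finset.prod_nonneg fun i _ => (hx i).choiceProb_nonneg (s i)

theorem IsMixed.apply_le_one (hx : IsMixed x) (i j : Fin n) : x i j ≤ 1 :=
  (Finset.single_le_sum (fun k _ => (hx i).1 k) (Finset.mem_univ j)).trans (hx i).2

theorem IsMixed.update (hx : IsMixed x) (i : Fin n) {y : Fin n → ℝ} (hy : IsStrat y) :
    IsMixed (Function.update x i y) :=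
  (Function.forall_update_iff x fun _ z => IsStrat z).mpr ⟨hy, fun k _ => hx k⟩

theorem sum_prob_forall_mem (x : Fin n → Fin n → ℝ) (I : Finset (Fin n))
    (T : Fin n → Finset (Option (Fin n))) :
    ∑ s with ∀ i ∈ I, s i ∈ T i, prob x s = ∏ i ∈ I, ∑ o ∈ T i, choiceProb (x i) o := by
  have hcylinder : ({s | ∀ i ∈ I, s i ∈ T i} : Finset (Fin n → Option (Fin n))) =
      Fintype.piFinset fun i => if i ∈ I then T i else Finset.univ := by
    ext s
    simp only [Finset.mem_filter_univ, Fintype.mem_piFinset]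
    refine forall_congr' fun i => ?_
    split_ifs with hi <;> simp [hi]
  have hfactor (i : Fin n) :
      ∑ o ∈ (if i ∈ I then T i else Finset.univ), choiceProb (x i) o =
        if i ∈ I then ∑ o ∈ T i, choiceProb (x i) o else 1 := by
    split_ifs
    · rfl
    · exact sum_choiceProb (x i)
  calc ∑ s with ∀ i ∈ I, s i ∈ T i, prob x s
      = ∏ i, ∑ o ∈ (if i ∈ I then T i else Finset.univ), choiceProb (x i) o := by
        rw [hcylinder, Finset.prod_univ_sum]
        rfl
    _ = ∏ i ∈ I, ∑ o ∈ T i, choiceProb (x i) o := by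
        simp only [hfactor, Fintype.prod_ite_mem]

theorem sum_prob_mem (x : Fin n → Fin n → ℝ) (i : Fin n) (A : Finset (Option (Fin n))) :
    ∑ s with s i ∈ A, prob x s = ∑ o ∈ A, choiceProb (x i) o := by
  simpa using sum_prob_forall_mem x {i} fun _ => A

theorem sum_prob_mem_and_mem (x : Fin n → Fin n → ℝ) {i j : Fin n} (hij : i ≠ j)
    (A B : Finset (Option (Fin n))) :
    ∑ s with s i ∈ A ∧ s j ∈ B, prob x s =
      (∑ o ∈ A, choiceProb (x i) o) * ∑ o ∈ B, choiceProb (x j) o := by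
  simpa [Finset.prod_pair hij, hij.symm] using
    sum_prob_forall_mem x {i, j} fun k => if k = i then A else B

end Prob

section GuruProb

variable {n : ℕ} {x : Fin n → Fin n → ℝ} {i j : Fin n}

/-- The probability under the mixed profile `x` that `j` is the guru of `i`; utilities are linear
in these probabilities. -/
def guruProb (x : Fin n → Fin n → ℝ) (i j : Fin n) : ℝ := ∑ s with guru s i = some j, prob x s

theorem guruProb_self (x : Fin n → Fin n → ℝ) (i : Fin n) : guruProb x i i = x i i := by
  simpa [guruProb, guru_self_eq_some_iff, choiceProb] using sum_prob_mem x i {some i}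

theorem IsMixed.sum_prob_le_of_imp (hx : IsMixed x) {p q : (Fin n → Option (Fin n)) → Prop}
    [DecidablePred p] [DecidablePred q] (hpq : ∀ s, p s → q s) :
    ∑ s with p s, prob x s ≤ ∑ s with q s, prob x s :=
  Finset.sum_le_sum_of_subset_of_nonneg (Finset.monotone_filter_right _ fun s _ => hpq s)
    fun s _ _ => hx.prob_nonneg s

theorem IsMixed.guruProb_le (hx : IsMixed x) (i j : Fin n) : guruProb x i j ≤ x j j :=
  calc guruProb x i j
      ≤ ∑ s with s j ∈ ({some j} : Finset _), prob x s :=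
        hx.sum_prob_le_of_imp fun _ hs => Finset.mem_singleton.mpr (votes_of_guru_eq_some hs)
    _ = x j j := by rw [sum_prob_mem, Finset.sum_singleton]; rfl

theorem IsMixed.guruProb_le_mul (hx : IsMixed x) (hij : i ≠ j) :
    guruProb x i j ≤ (1 - x i i) * x j j :=
  calc guruProb x i j
      ≤ ∑ s with s i ∈ ({some i}ᶜ : Finset _) ∧ s j ∈ ({some j} : Finset _), prob x s :=
        hx.sum_prob_le_of_imp fun _ hs => by
          simpa using And.intro (not_votes_of_guru_eq_some hij hs) (votes_of_guru_eq_some hs)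
    _ = (1 - x i i) * x j j := by
        rw [sum_prob_mem_and_mem x hij, sum_compl_choiceProb, Finset.sum_singleton]; rfl

theorem IsMixed.mul_le_guruProb (hx : IsMixed x) (hij : i ≠ j) :
    x i j * x j j ≤ guruProb x i j :=
  calc x i j * x j j
      = ∑ s with s i ∈ ({some j} : Finset _) ∧ s j ∈ ({some j} : Finset _), prob x s := by
        simp only [sum_prob_mem_and_mem x hij, Finset.sum_singleton]; rfl
    _ ≤ guruProb x i j :=
        hx.sum_prob_le_of_imp fun _ hs =>
          guru_eq_some_of_delegates (Finset.mem_singleton.mp hs.1) (Finset.mem_singleton.mp hs.2)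

theorem IsMixed.guruProb_eq_of_delegates (hx : IsMixed x) (hij : i ≠ j) (h : x i j = 1) :
    guruProb x i j = x j j :=
  (hx.guruProb_le i j).antisymm (by simpa [h] using hx.mul_le_guruProb hij)

end GuruProb

section Utility

variable {n : ℕ} {u x : Fin n → Fin n → ℝ} {i j : Fin n} {c : ℝ}

theorem util_eq_sum_guruProb (u x : Fin n → Fin n → ℝ) (i : Fin n) :
    util u x i = ∑ j, u i j * guruProb x i j := by
  have hpure (s : Fin n → Option (Fin n)) :
      pureUtil u s i = ∑ j, if guru s i = some j then u i j else 0 := by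
    cases h : guru s i <;> simp [pureUtil, h]
  simp only [util, hpure, guruProb, Finset.mul_sum, Finset.sum_filter, mul_ite, mul_zero]
  rw [Finset.sum_comm]
  simp only [mul_comm]

theorem util_eq_mul_guruProb (hu : u i = Pi.single j c) : util u x i = c * guruProb x i j := by
  simp [util_eq_sum_guruProb, hu, Pi.single_apply]

theorem util_single (u : Fin n → Fin n → ℝ) (d : Fin n → Fin n) (i : Fin n) :
    util u (fun k => Pi.single (d k) 1) i = pureUtil u (fun k => some (d k)) i := by
  have hprob (s : Fin n → Option (Fin n)) :
      prob (fun k => Pi.single (d k) 1) s = if s = fun k => some (d k) then 1 else 0 := by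
    change ∏ k, choiceProb (Pi.single (d k) 1) (s k) = _
    simp only [choiceProb_single, Fintype.prod_ite_zero, Finset.prod_const_one, funext_iff]
  simp [util, hprob]

theorem sum_utility_mem_SWvals (u : Fin n → Fin n → ℝ) (j : Fin n) :
    ∑ i, u i j ∈ SWvals u := by
  refine ⟨fun _ => Pi.single j 1, fun _ => isStrat_single j, Finset.sum_congr rfl fun i _ => ?_⟩
  have hguru : guru (fun _ => some j) i = some j := guru_eq_some_of_delegates rfl rfl
  rw [util_single, pureUtil, hguru, Option.elim_some]

end Utility

section EpsNash

variable {n : ℕ} {u x : Fin n → Fin n → ℝ} {i j : Fin n} {ε c c' : ℝ}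

theorem EpsNash.one_sub_le_vote (hN : EpsNash u ε x) (hc : 0 < c) (hu : u j = Pi.single j c) :
    1 - ε ≤ x j j := by
  have hdev := hN j _ (isStrat_single j)
  simp only [util_eq_mul_guruProb hu, guruProb_self, Function.update_self,
    Pi.single_eq_same] at hdev
  exact le_of_mul_le_mul_left (by linarith) hc

theorem EpsNash.vote_le_of_vote_pos (hN : EpsNash u ε x) (hx : IsMixed x) (hij : i ≠ j)
    (hc : 0 < c) (hu : u i = Pi.single j c) (hj : 0 < x j j) : x i i ≤ ε := by
  have hdelegate : guruProb (Function.update x i (Pi.single j 1)) i j = x j j := by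
    rw [(hx.update i (isStrat_single j)).guruProb_eq_of_delegates hij (by simp),
      Function.update_of_ne hij.symm]
  have hdev := hN i _ (isStrat_single j)
  simp only [util_eq_mul_guruProb hu, hdelegate] at hdev
  have hfactor : (1 - ε) * (c * x j j) ≤ (1 - x i i) * (c * x j j) :=
    calc (1 - ε) * (c * x j j)
        ≤ c * guruProb x i j := hdev
      _ ≤ c * ((1 - x i i) * x j j) := mul_le_mul_of_nonneg_left (hx.guruProb_le_mul hij) hc.le
      _ = (1 - x i i) * (c * x j j) := mul_left_comm _ _ _
  linarith [le_of_mul_le_mul_right hfactor (mul_pos hc hj)]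

theorem EpsNash.vote_le (hN : EpsNash u ε x) (hx : IsMixed x) (hij : i ≠ j)
    (hc : 0 < c) (hui : u i = Pi.single j c) (hc' : 0 < c') (huj : u j = Pi.single j c') :
    x i i ≤ ε := by
  rcases le_or_gt 1 ε with hε | hε
  · exact (hx.apply_le_one i i).trans hε
  · have hj : 0 < x j j := (sub_pos.mpr hε).trans_le (hN.one_sub_le_vote hc' huj)
    exact hN.vote_le_of_vote_pos hx hij hc hui hj

end EpsNash

section HubGame

variable {δ ε : ℝ} {x : Fin 3 → Fin 3 → ℝ}

/-- The game witnessing tightness: the hub `0` and the authority `1` value only the authority as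
guru, at `δ`, and the follower `2` values only the hub, at `1`. -/
def hubGame (δ : ℝ) : Fin 3 → Fin 3 → ℝ := ![Pi.single 1 δ, Pi.single 1 δ, Pi.single 0 1]

theorem hubGame_mem_Icc (hδ : δ ∈ Set.Icc 0 1) (i j : Fin 3) :
    hubGame δ i j ∈ Set.Icc 0 1 := by
  fin_cases i <;> fin_cases j <;> simp [hubGame, hδ.1, hδ.2]

theorem one_mem_SWvals_hubGame (δ : ℝ) : 1 ∈ SWvals (hubGame δ) := by
  simpa [hubGame, Fin.sum_univ_three] using sum_utility_mem_SWvals (hubGame δ) 0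

theorem EpsNash.SW_hubGame_le (hN : EpsNash (hubGame δ) ε x) (hx : IsMixed x) (hδ : 0 < δ) :
    SW (hubGame δ) x ≤ ε + 2 * δ := by
  have hutil_le {i : Fin 3} (hu : hubGame δ i = Pi.single 1 δ) : util (hubGame δ) x i ≤ δ := by
    rw [util_eq_mul_guruProb hu]
    exact mul_le_of_le_one_right hδ.le ((hx.guruProb_le i 1).trans (hx.apply_le_one 1 1))
  have hhub : util (hubGame δ) x 0 ≤ δ := hutil_le rfl
  have hauthority : util (hubGame δ) x 1 ≤ δ := hutil_le rfl
  have hfollower : util (hubGame δ) x 2 ≤ ε :=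
    calc util (hubGame δ) x 2
        = guruProb x 2 0 := by rw [util_eq_mul_guruProb (j := 0) (c := 1) rfl, one_mul]
      _ ≤ x 0 0 := hx.guruProb_le 2 0
      _ ≤ ε := hN.vote_le hx (j := 1) (by decide) hδ rfl hδ rfl
  rw [SW, Fin.sum_univ_three]
  linarith

end HubGame

/-- Tightness: for every ε ∈ [0,1] and γ > 0 there is a liquid democracy game in
which every ε-Nash equilibrium x satisfies SW(x) ≤ ε · OPT + γ. -/
theorem stmt11 (ε : ℝ) (hε : ε ∈ Set.Icc (0:ℝ) 1) (γ : ℝ) (hγ : 0 < γ) :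
    ∃ (n : ℕ) (u : Fin n → Fin n → ℝ),
      (∀ i j, 0 ≤ u i j ∧ u i j ≤ 1) ∧
      ∀ OPT : ℝ, IsGreatest (SWvals u) OPT →
        ∀ x, IsMixed x → EpsNash u ε x → SW u x ≤ ε * OPT + γ := by
  obtain ⟨δ, hδ, hδ1, hδγ⟩ : ∃ δ : ℝ, 0 < δ ∧ δ ≤ 1 ∧ 2 * δ ≤ γ :=
    ⟨min 1 (γ / 2), lt_min one_pos (half_pos hγ), min_le_left _ _,
      by linarith [min_le_right 1 (γ / 2)]⟩
  refine ⟨3, hubGame δ, hubGame_mem_Icc ⟨hδ.le, hδ1⟩, fun OPT hOPT x hx hN => ?_⟩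
  have hOPT1 : 1 ≤ OPT := hOPT.2 (one_mem_SWvals_hubGame δ)
  calc SW (hubGame δ) x
      ≤ ε + 2 * δ := hN.SW_hubGame_le hx hδ
    _ ≤ ε * OPT + γ := add_le_add (le_mul_of_one_le_right hε.1 hOPT1) hδγ
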